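/- (Stopping-time construction produces a sparse family with L^∞ control.) Let f be locally integrable on a dyadic cube Q₀, and define recursively 𝒮 starting from {Q₀}: ch_𝒮(S) consists of the maximal dyadic S' ⊊ S with ⟨‖f‖_E⟩_{S'} > 2⟨‖f‖_E⟩_S. Then: (1) ∑_{S'∈ch_𝒮(S)}|S'| ≤ |S|/2, so 𝒮 is sparse; (2) for f_S := f·1_{E_𝒮(S)} + ∑_{S'∈ch_𝒮(S)} ⟨f⟩_{S'}1_{S'} one has ∫_Q f = ∫_Q f_S whenever π_𝒮(Q) = S; and (3) ‖f_S‖_{L^∞(E)} ≤ 2·2^d ⟨‖f‖_E⟩_S. -/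

import Mathlib

open MeasureTheory
open scoped ENNReal

noncomputable section

/-- A dyadic cube in `ℝ^d`: generation `k` and lower-left corner `2^{-k} m`. -/
structure DyadicCube (d : ℕ) where
  k : ℤ
  m : Fin d → ℤ

namespace DyadicCube

variable {d : ℕ}

/-- The underlying set `∏ᵢ [2^{-k} mᵢ, 2^{-k}(mᵢ+1))`. -/
def set (Q : DyadicCube d) : Set (Fin d → ℝ) :=
  {x | ∀ i, (Q.m i : ℝ) * (2:ℝ)^(-Q.k) ≤ x i ∧ x i < ((Q.m i : ℝ) + 1) * (2:ℝ)^(-Q.k)}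

/-- Side length `ℓ(Q) = 2^{-k}`. -/
def len (Q : DyadicCube d) : ℝ := (2:ℝ)^(-Q.k)

instance : Countable (DyadicCube d) :=
  Function.Injective.countable (f := fun Q : DyadicCube d => (Q.k, Q.m))
    (fun Q Q' h => by cases Q; cases Q'; simpa using h)

/-- The dyadic child of `Q` selected by `e ∈ {0,1}^d`. -/
def child (Q : DyadicCube d) (e : Fin d → Bool) : DyadicCube d :=
  ⟨Q.k + 1, fun i => 2 * Q.m i + (if e i then 1 else 0)⟩

end DyadicCube

variable {d : ℕ} {E : Type*} [NormedAddCommGroup E] [NormedSpace ℝ E] [CompleteSpace E]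

/-- Average `⟨f⟩_Q = μ(Q)⁻¹ ∫_Q f dμ`. -/
def cubeAvg (μ : Measure (Fin d → ℝ)) (f : (Fin d → ℝ) → E) (Q : DyadicCube d) : E :=
  (μ Q.set).toReal⁻¹ • ∫ x in Q.set, f x ∂μ

/-- Martingale (Haar) difference `D_Q f = ∑_{Q'∈child(Q)} ⟨f⟩_{Q'} 1_{Q'} − ⟨f⟩_Q 1_Q`. -/
def haarDiff (μ : Measure (Fin d → ℝ)) (f : (Fin d → ℝ) → E) (Q : DyadicCube d) :
    (Fin d → ℝ) → E := fun x =>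
  (∑ e : Fin d → Bool, (Q.child e).set.indicator (fun _ => cubeAvg μ f (Q.child e)) x)
    - Q.set.indicator (fun _ => cubeAvg μ f Q) x

/-- `ch_𝒮(S)`: the maximal elements of `𝒮` strictly contained in `S`. -/
def chColl (𝒮 : Set (DyadicCube d)) (S : DyadicCube d) : Set (DyadicCube d) :=
  {S' | S' ∈ 𝒮 ∧ S'.set ⊂ S.set ∧
    ∀ S'' ∈ 𝒮, S''.set ⊂ S.set → S'.set ⊆ S''.set → S''.set = S'.set}

/-- `E_𝒮(S) = S ∖ ⋃ ch_𝒮(S)`. -/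
def ESet (𝒮 : Set (DyadicCube d)) (S : DyadicCube d) : Set (Fin d → ℝ) :=
  S.set \ ⋃ S' ∈ chColl 𝒮 S, DyadicCube.set S'

/-- `𝒮` is sparse: `μ(E_𝒮(S)) ≥ μ(S)/2` for all `S ∈ 𝒮`. -/
def IsSparse (μ : Measure (Fin d → ℝ)) (𝒮 : Set (DyadicCube d)) : Prop :=
  ∀ S ∈ 𝒮, μ S.set ≤ 2 * μ (ESet 𝒮 S)

/-- `π_𝒮(Q) = S`: `S` is the minimal element of `𝒮` containing `Q`. -/
def isStopParent (𝒮 : Set (DyadicCube d)) (Q S : DyadicCube d) : Prop :=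
  S ∈ 𝒮 ∧ Q.set ⊆ S.set ∧ ∀ S' ∈ 𝒮, Q.set ⊆ S'.set → S.set ⊆ S'.set

/-- `P_S f = ∑_{Q : π_𝒮(Q) = S} D_Q f`. -/
def PS (μ : Measure (Fin d → ℝ)) (𝒮 : Set (DyadicCube d)) (S : DyadicCube d)
    (f : (Fin d → ℝ) → E) : (Fin d → ℝ) → E := fun x =>
  ∑' Q : {Q : DyadicCube d // isStopParent 𝒮 Q S}, haarDiff μ f Q.1 x

/-- ENNReal average of the norm, `⟨‖f‖⟩_S^μ`. -/
def cubeAvgN (μ : Measure (Fin d → ℝ)) (f : (Fin d → ℝ) → E) (Q : DyadicCube d) : ℝ≥0∞ :=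
  (μ Q.set)⁻¹ * ∫⁻ x in Q.set, ‖f x‖₊ ∂μ

end

noncomputable section

open MeasureTheory
open scoped ENNReal

variable {d : ℕ} {E : Type*} [NormedAddCommGroup E] [NormedSpace ℝ E] [CompleteSpace E]

/-- The stopping children of `S` for `f`: maximal dyadic `S' ⊊ S` with
`⟨‖f‖⟩_{S'} > 2⟨‖f‖⟩_S` (Lebesgue measure). -/
def stopChildren (f : (Fin d → ℝ) → E) (S : DyadicCube d) : Set (DyadicCube d) :=
  {S' | S'.set ⊂ S.set ∧ cubeAvgN volume f S' > 2 * cubeAvgN volume f S ∧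
    ∀ S'' : DyadicCube d, S''.set ⊂ S.set →
      cubeAvgN volume f S'' > 2 * cubeAvgN volume f S →
      S'.set ⊆ S''.set → S''.set = S'.set}

/-- The stopping family generated from `Q₀`, level by level. -/
def stopFamilyLevel (f : (Fin d → ℝ) → E) (Q₀ : DyadicCube d) : ℕ → Set (DyadicCube d)
  | 0 => {Q₀}
  | n + 1 => ⋃ S ∈ stopFamilyLevel f Q₀ n, stopChildren f S

/-- The full stopping family `𝒮 = ⋃ₙ 𝒮ₙ`. -/
def stopFamily (f : (Fin d → ℝ) → E) (Q₀ : DyadicCube d) : Set (DyadicCube d) :=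
  ⋃ n, stopFamilyLevel f Q₀ n

namespace DyadicCube

theorem set_eq_pi (Q : DyadicCube d) :
    Q.set = Set.univ.pi fun i =>
      Set.Ico ((Q.m i : ℝ) * (2:ℝ) ^ (-Q.k)) (((Q.m i : ℝ) + 1) * (2:ℝ) ^ (-Q.k)) := by
  ext x
  simp [set]

theorem measurableSet_set (Q : DyadicCube d) : MeasurableSet Q.set := by
  rw [set_eq_pi]
  exact MeasurableSet.univ_pi fun i => measurableSet_Ico

theorem mem_set_iff_floor {Q : DyadicCube d} {x : Fin d → ℝ} :
    x ∈ Q.set ↔ ∀ i, ⌊x i * (2:ℝ) ^ Q.k⌋ = Q.m i := by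
  refine forall_congr' fun i => ?_
  rw [Int.floor_eq_iff, zpow_neg, ← div_eq_mul_inv, ← div_eq_mul_inv,
    div_le_iff₀ (by positivity), lt_div_iff₀ (by positivity)]

theorem floor_mul_zpow_eq_of_le {x y : ℝ} {k k' : ℤ} (hk : k ≤ k')
    (h : ⌊x * (2:ℝ) ^ k'⌋ = ⌊y * (2:ℝ) ^ k'⌋) : ⌊x * (2:ℝ) ^ k⌋ = ⌊y * (2:ℝ) ^ k⌋ := by
  obtain ⟨n, rfl⟩ := Int.le.dest hk
  have key : ∀ z : ℝ, z * (2:ℝ) ^ k = z * (2:ℝ) ^ (k + n) / ((2 ^ n : ℕ) : ℝ) := by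
    intro z
    rw [zpow_add₀ (by norm_num), zpow_natCast]
    push_cast
    field_simp
  rw [key x, key y, Int.floor_div_natCast, Int.floor_div_natCast, h]

/-- Two dyadic cubes that meet are nested. -/
theorem set_subset_of_mem {Q R : DyadicCube d} {x : Fin d → ℝ} (hk : Q.k ≤ R.k)
    (hQ : x ∈ Q.set) (hR : x ∈ R.set) : R.set ⊆ Q.set := by
  intro y hy
  rw [mem_set_iff_floor] at *
  intro i
  rw [← hQ i]
  exact floor_mul_zpow_eq_of_le hk ((hy i).trans (hR i).symm)

/-- The dyadic cube of generation `k` containing `x`. -/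
def containing (k : ℤ) (x : Fin d → ℝ) : DyadicCube d :=
  ⟨k, fun i => ⌊x i * (2:ℝ) ^ k⌋⟩

theorem mem_containing (k : ℤ) (x : Fin d → ℝ) : x ∈ (containing k x).set :=
  mem_set_iff_floor.2 fun _ => rfl

theorem nonempty_set (Q : DyadicCube d) : Q.set.Nonempty :=
  ⟨fun i => (Q.m i : ℝ) * (2:ℝ) ^ (-Q.k), mem_set_iff_floor.2 fun i => by
    rw [mul_assoc, ← zpow_add₀ (by norm_num)]; simp⟩

theorem volume_set (Q : DyadicCube d) :
    volume Q.set = ENNReal.ofReal ((2:ℝ) ^ (-Q.k)) ^ d := by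
  rw [set_eq_pi, Real.volume_pi_Ico]
  have h : ∀ i, ((Q.m i : ℝ) + 1) * (2:ℝ) ^ (-Q.k) - (Q.m i : ℝ) * (2:ℝ) ^ (-Q.k)
      = (2:ℝ) ^ (-Q.k) := fun i => by ring
  simp only [h, Finset.prod_const, Finset.card_univ, Fintype.card_fin]

theorem volume_set_ne_zero (Q : DyadicCube d) : volume Q.set ≠ 0 := by
  rw [volume_set]
  exact pow_ne_zero _ (by simpa using by positivity)

theorem volume_set_ne_top (Q : DyadicCube d) : volume Q.set ≠ ∞ := by
  rw [volume_set]
  exact ENNReal.pow_ne_top ENNReal.ofReal_ne_top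

theorem k_le_of_subset (hd : d ≠ 0) {Q R : DyadicCube d} (h : Q.set ⊆ R.set) : R.k ≤ Q.k := by
  have := measure_mono (μ := volume) h
  rw [volume_set, volume_set, ENNReal.pow_le_pow_left_iff hd,
    ENNReal.ofReal_le_ofReal_iff (by positivity), zpow_le_zpow_iff_right₀ (by norm_num)] at this
  omega

theorem set_eq_of_subset_of_k_le {Q R : DyadicCube d} (h : Q.set ⊆ R.set) (hk : Q.k ≤ R.k) :
    Q.set = R.set := by
  obtain ⟨x, hx⟩ := Q.nonempty_set
  exact h.antisymm (set_subset_of_mem hk hx (h hx))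

theorem eq_of_set_eq (hd : d ≠ 0) {Q R : DyadicCube d} (h : Q.set = R.set) : Q = R := by
  have hk : Q.k = R.k := le_antisymm (k_le_of_subset hd h.ge) (k_le_of_subset hd h.le)
  obtain ⟨x, hx⟩ := Q.nonempty_set
  have hx' : x ∈ R.set := h ▸ hx
  rw [mem_set_iff_floor] at hx hx'
  cases Q
  cases R
  simp only at hk
  subst hk
  congr
  funext i
  exact (hx i).symm.trans (hx' i)

theorem dim_ne_zero_of_ssubset {Q R : DyadicCube d} (h : Q.set ⊂ R.set) : d ≠ 0 := by
  rintro rfl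
  obtain ⟨x, hx⟩ := Q.nonempty_set
  exact h.2 fun y _ => Subsingleton.elim x y ▸ hx

theorem subset_or_subset_of_mem {Q R : DyadicCube d} {x : Fin d → ℝ}
    (hQ : x ∈ Q.set) (hR : x ∈ R.set) : Q.set ⊆ R.set ∨ R.set ⊆ Q.set :=
  (le_total R.k Q.k).imp (fun h => set_subset_of_mem h hR hQ) fun h => set_subset_of_mem h hQ hR

theorem set_ae_eq_closedBall (Q : DyadicCube d) :
    Q.set =ᵐ[volume] Metric.closedBall
      (fun i => ((Q.m i : ℝ) + 1 / 2) * (2:ℝ) ^ (-Q.k)) ((2:ℝ) ^ (-Q.k) / 2) := by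
  rw [set_eq_pi, closedBall_pi _ (by positivity)]
  have h : (Set.univ.pi fun i => Metric.closedBall (((Q.m i : ℝ) + 1 / 2) * (2:ℝ) ^ (-Q.k))
      ((2:ℝ) ^ (-Q.k) / 2)) =
      Set.Icc (fun i => (Q.m i : ℝ) * (2:ℝ) ^ (-Q.k))
        (fun i => ((Q.m i : ℝ) + 1) * (2:ℝ) ^ (-Q.k)) := by
    rw [← Set.pi_univ_Icc]
    refine Set.pi_congr rfl fun i _ => ?_
    rw [Real.Icc_eq_closedBall]
    congr 1 <;> ring
  rw [h]
  exact Measure.univ_pi_Ico_ae_eq_Icc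

theorem set_subset_closedBall (Q : DyadicCube d) :
    Q.set ⊆ Metric.closedBall
      (fun i => ((Q.m i : ℝ) + 1 / 2) * (2:ℝ) ^ (-Q.k)) ((2:ℝ) ^ (-Q.k) / 2) := by
  intro x hx
  rw [closedBall_pi _ (by positivity)]
  intro i _
  beta_reduce
  rw [Real.closedBall_eq_Icc]
  constructor <;> nlinarith [(hx i).1, (hx i).2]

end DyadicCube

theorem MeasureTheory.LocallyIntegrable.integrableOn_dyadicCube {F : Type*} [NormedAddCommGroup F]
    {f : (Fin d → ℝ) → F}
    (hf : LocallyIntegrable f volume) (Q : DyadicCube d) : IntegrableOn f Q.set volume :=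
  (hf.integrableOn_isCompact (isCompact_closedBall _ _)).mono_set Q.set_subset_closedBall

theorem volume_mul_cubeAvgN {F : Type*} [NormedAddCommGroup F]
    (f : (Fin d → ℝ) → F) (Q : DyadicCube d) :
    volume Q.set * cubeAvgN volume f Q = ∫⁻ x in Q.set, ‖f x‖₊ := by
  rw [cubeAvgN, ← mul_assoc, ENNReal.mul_inv_cancel Q.volume_set_ne_zero Q.volume_set_ne_top,
    one_mul]

theorem cubeAvgN_ne_top {F : Type*} [NormedAddCommGroup F]
    {f : (Fin d → ℝ) → F} (hf : LocallyIntegrable f volume)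
    (Q : DyadicCube d) : cubeAvgN volume f Q ≠ ∞ :=
  ENNReal.mul_ne_top (ENNReal.inv_ne_top.2 Q.volume_set_ne_zero)
    (hf.integrableOn_dyadicCube Q).2.ne

theorem cubeAvgN_congr {F : Type*} [NormedAddCommGroup F]
    (f : (Fin d → ℝ) → F) {Q R : DyadicCube d} (h : Q.set = R.set) :
    cubeAvgN volume f Q = cubeAvgN volume f R := by
  simp only [cubeAvgN, h]

theorem enorm_cubeAvg_le {F : Type*} [NormedAddCommGroup F] [NormedSpace ℝ F]
    (f : (Fin d → ℝ) → F) (Q : DyadicCube d) :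
    ‖cubeAvg volume f Q‖ₑ ≤ cubeAvgN volume f Q := by
  rw [cubeAvg, cubeAvgN, enorm_smul]
  refine mul_le_mul' (le_of_eq ?_) (enorm_integral_le_lintegral_enorm _)
  rw [Real.enorm_of_nonneg (by positivity), ENNReal.ofReal_inv_of_pos
    (ENNReal.toReal_pos Q.volume_set_ne_zero Q.volume_set_ne_top),
    ENNReal.ofReal_toReal Q.volume_set_ne_top]

theorem setAverage_dyadicCube {F : Type*} [NormedAddCommGroup F] [NormedSpace ℝ F]
    (f : (Fin d → ℝ) → F) (Q : DyadicCube d) :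
    ⨍ x in Q.set, f x = cubeAvg volume f Q := by
  rw [setAverage_eq, cubeAvg, measureReal_def]

/-- Averages over a dyadic cube are controlled by those over the dyadic parent. -/
theorem cubeAvgN_le_of_subset_of_k_eq {F : Type*} [NormedAddCommGroup F]
    (f : (Fin d → ℝ) → F) {Q R : DyadicCube d}
    (h : Q.set ⊆ R.set) (hk : Q.k = R.k + 1) :
    cubeAvgN volume f Q ≤ 2 ^ d * cubeAvgN volume f R := by
  have hvol : volume R.set = 2 ^ d * volume Q.set := by
    rw [R.volume_set, Q.volume_set, ← mul_pow, hk]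
    congr 1
    rw [← ENNReal.ofReal_ofNat 2, ← ENNReal.ofReal_mul (by norm_num), neg_add,
      zpow_add₀ (by norm_num)]
    congr 1
    norm_num
    ring
  have hle : volume Q.set * cubeAvgN volume f Q
      ≤ volume Q.set * (2 ^ d * cubeAvgN volume f R) := by
    rw [← mul_assoc, mul_comm (volume Q.set) (2 ^ d), ← hvol, volume_mul_cubeAvgN,
      volume_mul_cubeAvgN]
    exact lintegral_mono_set h
  exact (ENNReal.mul_le_mul_iff_right Q.volume_set_ne_zero Q.volume_set_ne_top).1 hle

theorem ae_enorm_le_of_forall_cubeAvgN_le {f : (Fin d → ℝ) → E}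
    (hf : LocallyIntegrable f volume) :
    ∀ᵐ x : Fin d → ℝ, ∀ (k₀ : ℤ) (C : ℝ≥0∞),
      (∀ Q : DyadicCube d, x ∈ Q.set → k₀ ≤ Q.k → cubeAvgN volume f Q ≤ C) → ‖f x‖ₑ ≤ C := by
  filter_upwards [IsUnifLocDoublingMeasure.ae_tendsto_average volume hf 1] with x hx k₀ C hC
  have hmem := DyadicCube.mem_containing (d := d)
  have hlim := hx (l := Filter.atTop (α := ℕ))
    (fun n i => (((DyadicCube.containing (k₀ + n) x).m i : ℝ) + 1 / 2) * (2:ℝ) ^ (-(k₀ + n : ℤ)))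
    (fun n => (2:ℝ) ^ (-(k₀ + n : ℤ)) / 2) ?_ ?_
  · refine le_of_tendsto hlim.enorm (Filter.Eventually.of_forall fun n => ?_)
    have h := (setAverage_congr (f := f)
      (DyadicCube.containing (k₀ + n) x).set_ae_eq_closedBall).symm.trans
      (setAverage_dyadicCube f _)
    exact (congrArg enorm h).trans_le <| (enorm_cubeAvg_le _ _).trans
      (hC _ (hmem _ _) (le_add_of_nonneg_right (Int.natCast_nonneg n)))
  · refine tendsto_nhdsWithin_iff.2 ⟨?_, Filter.Eventually.of_forall fun n => by
      simp only [Set.mem_Ioi]; positivity⟩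
    have h := (tendsto_pow_atTop_nhds_zero_of_lt_one (r := (1 / 2 : ℝ)) (by norm_num)
      (by norm_num)).const_mul ((2:ℝ) ^ (-k₀) / 2)
    rw [mul_zero] at h
    refine h.congr fun n => ?_
    rw [neg_add, zpow_add₀ (by norm_num), zpow_neg _ (n : ℤ), zpow_natCast, one_div, inv_pow]
    ring
  · refine Filter.Eventually.of_forall fun n => ?_
    rw [one_mul]
    exact (DyadicCube.containing (k₀ + n) x).set_subset_closedBall (hmem _ _)

theorem exists_stopChildren_superset {F : Type*} [NormedAddCommGroup F]
    {f : (Fin d → ℝ) → F} {Q S : DyadicCube d}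
    (hQ : Q.set ⊂ S.set) (h : cubeAvgN volume f Q > 2 * cubeAvgN volume f S) :
    ∃ R ∈ stopChildren f S, Q.set ⊆ R.set := by
  have hd := DyadicCube.dim_ne_zero_of_ssubset hQ
  obtain ⟨_, ⟨R, rfl, hQR, hRS, hR⟩, hmin⟩ := Int.exists_least_of_bdd
    (P := fun z => ∃ R : DyadicCube d, R.k = z ∧ Q.set ⊆ R.set ∧ R.set ⊂ S.set ∧
      cubeAvgN volume f R > 2 * cubeAvgN volume f S)
    ⟨S.k, by rintro _ ⟨R, rfl, -, hR, -⟩; exact DyadicCube.k_le_of_subset hd hR.1⟩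
    ⟨Q.k, Q, rfl, subset_rfl, hQ, h⟩
  refine ⟨R, ⟨hRS, hR, fun T hTS hT hRT => ?_⟩, hQR⟩
  exact (DyadicCube.set_eq_of_subset_of_k_le hRT
    (hmin _ ⟨T, rfl, hQR.trans hRT, hTS, hT⟩)).symm

theorem pairwise_disjoint_stopChildren {F : Type*} [NormedAddCommGroup F]
    (f : (Fin d → ℝ) → F) (S : DyadicCube d) :
    Pairwise (Function.onFun Disjoint fun S' : stopChildren f S => (S'.1).set) := by
  rintro ⟨A, hA⟩ ⟨B, hB⟩ hne
  refine Set.disjoint_left.2 fun x hxA hxB => hne (Subtype.ext ?_)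
  refine DyadicCube.eq_of_set_eq (DyadicCube.dim_ne_zero_of_ssubset hA.1) ?_
  rcases DyadicCube.subset_or_subset_of_mem hxA hxB with h | h
  · exact (hA.2.2 B hB.1 hB.2.1 h).symm
  · exact hB.2.2 A hA.1 hA.2.1 h

theorem tsum_volume_stopChildren_le {F : Type*} [NormedAddCommGroup F]
    {f : (Fin d → ℝ) → F} (hf : LocallyIntegrable f volume)
    (S : DyadicCube d) :
    ∑' S' : stopChildren f S, volume (S'.1).set ≤ volume S.set / 2 := by
  have hsum : ∑' S' : stopChildren f S, ∫⁻ x in (S'.1).set, ‖f x‖₊ ≤ ∫⁻ x in S.set, ‖f x‖₊ := by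
    rw [← lintegral_iUnion (fun S' => (S'.1).measurableSet_set)
      (pairwise_disjoint_stopChildren f S)]
    exact lintegral_mono_set (Set.iUnion_subset fun S' => S'.2.1.1)
  rcases eq_or_ne (cubeAvgN volume f S) 0 with h0 | h0
  · have hempty : IsEmpty (stopChildren f S) := by
      refine ⟨fun S' => ?_⟩
      have h := S'.2.2.1
      have hS := volume_mul_cubeAvgN f S
      rw [h0, mul_zero] at hS
      rw [h0, mul_zero, cubeAvgN, le_antisymm
        ((lintegral_mono_set S'.2.1.1).trans hS.ge) zero_le, mul_zero] at h
      exact lt_irrefl _ h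
    simp
  · have ht := cubeAvgN_ne_top hf S
    refine (ENNReal.mul_le_mul_iff_right (a := 2 * cubeAvgN volume f S) (by simp [h0])
      (ENNReal.mul_ne_top (by simp) ht)).1 ?_
    calc 2 * cubeAvgN volume f S * ∑' S' : stopChildren f S, volume (S'.1).set
        = ∑' S' : stopChildren f S, 2 * cubeAvgN volume f S * volume (S'.1).set :=
          ENNReal.tsum_mul_left.symm
      _ ≤ ∑' S' : stopChildren f S, ∫⁻ x in (S'.1).set, ‖f x‖₊ := by
          refine ENNReal.tsum_le_tsum fun S' => ?_
          rw [← volume_mul_cubeAvgN, mul_comm]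
          exact mul_le_mul_right S'.2.2.1.le _
      _ ≤ ∫⁻ x in S.set, ‖f x‖₊ := hsum
      _ = 2 * cubeAvgN volume f S * (volume S.set / 2) := by
          rw [← volume_mul_cubeAvgN, mul_comm 2, mul_assoc,
            ENNReal.mul_div_cancel (by simp) (by simp), mul_comm]

theorem subset_of_mem_stopFamilyLevel {F : Type*} [NormedAddCommGroup F]
    {f : (Fin d → ℝ) → F} {Q₀ : DyadicCube d} :
    ∀ {n : ℕ} {S : DyadicCube d}, S ∈ stopFamilyLevel f Q₀ n → S.set ⊆ Q₀.set
  | 0, S, h => by rw [show S = Q₀ from h]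
  | n + 1, S, h => by
    obtain ⟨P, hP, hS⟩ := Set.mem_iUnion₂.1 h
    exact hS.1.1.trans (subset_of_mem_stopFamilyLevel hP)

theorem exists_stopChildren_of_mem_stopFamilyLevel {F : Type*} [NormedAddCommGroup F]
    {f : (Fin d → ℝ) → F} {Q₀ : DyadicCube d}
    {n m : ℕ} {S T : DyadicCube d} (hS : S ∈ stopFamilyLevel f Q₀ n)
    (hT : T ∈ stopFamilyLevel f Q₀ m) (hTS : T.set ⊂ S.set) :
    ∃ R ∈ stopChildren f S, T.set ⊆ R.set := by
  induction hN : n + m using Nat.strong_induction_on generalizing n m S T with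
  | _ N ih =>
    cases m with
    | zero =>
      rw [show T = Q₀ from hT] at hTS
      exact absurd (subset_of_mem_stopFamilyLevel hS) hTS.2
    | succ m =>
      obtain ⟨P, hP, hTP⟩ := Set.mem_iUnion₂.1 hT
      obtain ⟨x, hx⟩ := T.nonempty_set
      rcases DyadicCube.subset_or_subset_of_mem (hTP.1.1 hx) (hTS.1 hx) with h | h
      · rcases h.eq_or_ssubset with h | h
        · rw [DyadicCube.eq_of_set_eq (DyadicCube.dim_ne_zero_of_ssubset hTS) h] at hTP
          exact ⟨T, hTP, subset_rfl⟩
        · obtain ⟨R, hR, hPR⟩ := ih (n + m) (by omega) hS hP h rfl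
          exact ⟨R, hR, hTP.1.1.trans hPR⟩
      · rcases h.eq_or_ssubset with h | h
        · rw [← DyadicCube.eq_of_set_eq (DyadicCube.dim_ne_zero_of_ssubset hTS) h] at hTP
          exact ⟨T, hTP, subset_rfl⟩
        · obtain ⟨R, hR, hSR⟩ := ih (m + n) (by omega) hP hS h rfl
          have hRT := hTP.2.2 R hR.1 hR.2.1 (hTS.1.trans hSR)
          exact absurd (hRT ▸ hSR) hTS.2

theorem stopChildren_subset_stopFamily {F : Type*} [NormedAddCommGroup F]
    {f : (Fin d → ℝ) → F} {Q₀ S : DyadicCube d}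
    (hS : S ∈ stopFamily f Q₀) : stopChildren f S ⊆ stopFamily f Q₀ := by
  obtain ⟨n, hn⟩ := Set.mem_iUnion.1 hS
  exact fun S' hS' => Set.mem_iUnion.2 ⟨n + 1, Set.mem_iUnion₂.2 ⟨S, hn, hS'⟩⟩

theorem diff_stopChildren_subset_ESet {F : Type*} [NormedAddCommGroup F]
    {f : (Fin d → ℝ) → F} {Q₀ S : DyadicCube d}
    (hS : S ∈ stopFamily f Q₀) :
    (S.set \ ⋃ S' : stopChildren f S, (S'.1).set) ⊆ ESet (stopFamily f Q₀) S := by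
  obtain ⟨n, hn⟩ := Set.mem_iUnion.1 hS
  refine Set.sdiff_subset_sdiff_right (Set.iUnion₂_subset fun T hT => ?_)
  obtain ⟨m, hm⟩ := Set.mem_iUnion.1 hT.1
  obtain ⟨R, hR, hTR⟩ := exists_stopChildren_of_mem_stopFamilyLevel hn hm hT.2.1
  exact hTR.trans (Set.subset_iUnion (fun S' : stopChildren f S => (S'.1).set) ⟨R, hR⟩)

theorem isSparse_stopFamily {F : Type*} [NormedAddCommGroup F]
    {f : (Fin d → ℝ) → F} (hf : LocallyIntegrable f volume)
    (Q₀ : DyadicCube d) : IsSparse volume (stopFamily f Q₀) := by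
  intro S hS
  set U : Set (Fin d → ℝ) := ⋃ S' : stopChildren f S, (S'.1).set
  have hU : volume U ≤ volume S.set / 2 :=
    (measure_iUnion_le _).trans (tsum_volume_stopChildren_le hf S)
  have hE : volume S.set - volume S.set / 2 ≤ volume (ESet (stopFamily f Q₀) S) :=
    (tsub_le_tsub_left hU _).trans
      (le_measure_sdiff.trans (measure_mono (diff_stopChildren_subset_ESet hS)))
  rw [ENNReal.sub_half S.volume_set_ne_top] at hE
  calc volume S.set = 2 * (volume S.set / 2) :=
        (ENNReal.mul_div_cancel (by simp) (by simp)).symm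
    _ ≤ _ := mul_le_mul_right hE 2

/-- The function `f_S`: equal to `f` off the stopping children of `S`, and to the average of `f`
on each of them. -/
def stopFun (f : (Fin d → ℝ) → E) (S : DyadicCube d) (x : Fin d → ℝ) : E :=
  (S.set \ ⋃ S' ∈ stopChildren f S, DyadicCube.set S').indicator f x
    + ∑' S' : stopChildren f S, (S'.1).set.indicator (fun _ => cubeAvg volume f S'.1) x

theorem stopFun_of_mem_stopChildren {F : Type*} [NormedAddCommGroup F] [NormedSpace ℝ F]
    {f : (Fin d → ℝ) → F} {S S' : DyadicCube d}
    (hS' : S' ∈ stopChildren f S) {x : Fin d → ℝ} (hx : x ∈ S'.set) :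
    stopFun f S x = cubeAvg volume f S' := by
  rw [stopFun, Set.indicator_of_notMem fun h => h.2 (Set.mem_biUnion hS' hx), zero_add,
    tsum_eq_single ⟨S', hS'⟩, Set.indicator_of_mem hx]
  intro T hT
  exact Set.indicator_of_notMem
    (Set.disjoint_right.1 (pairwise_disjoint_stopChildren f S hT) hx) _

theorem stopFun_of_notMem {F : Type*} [NormedAddCommGroup F] [NormedSpace ℝ F]
    {f : (Fin d → ℝ) → F} {S : DyadicCube d} {x : Fin d → ℝ}
    (hx : ∀ S' ∈ stopChildren f S, x ∉ S'.set) : stopFun f S x = S.set.indicator f x := by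
  have h0 : ∀ S' : stopChildren f S,
      (S'.1).set.indicator (fun _ => cubeAvg volume f S'.1) x = 0 :=
    fun S' => Set.indicator_of_notMem (hx _ S'.2) _
  simp only [stopFun, h0, tsum_zero, add_zero]
  by_cases hxS : x ∈ S.set
  · rw [Set.indicator_of_mem hxS, Set.indicator_of_mem]
    exact ⟨hxS, by simpa using hx⟩
  · rw [Set.indicator_of_notMem hxS, Set.indicator_of_notMem fun h => hxS h.1]

theorem integral_stopFun_eq {f : (Fin d → ℝ) → E} (hf : LocallyIntegrable f volume)
    {Q S : DyadicCube d} (hQS : Q.set ⊆ S.set)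
    (hQ : ∀ S' ∈ stopChildren f S, ¬ Q.set ⊆ S'.set) :
    ∫ x in Q.set, f x = ∫ x in Q.set, stopFun f S x := by
  set s : stopChildren f S → Set (Fin d → ℝ) := fun S' => Q.set ∩ (S'.1).set with hs
  have hfQ := hf.integrableOn_dyadicCube Q
  have hsm : ∀ S', MeasurableSet (s S') := fun S' =>
    Q.measurableSet_set.inter (S'.1).measurableSet_set
  have hsd : Pairwise (Function.onFun Disjoint s) := fun A B h =>
    (pairwise_disjoint_stopChildren f S h).mono Set.inter_subset_right Set.inter_subset_right
  have hUm : MeasurableSet (⋃ S' : stopChildren f S, (S'.1).set) :=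
    MeasurableSet.iUnion fun S' => (S'.1).measurableSet_set
  have hUs : Q.set ∩ (⋃ S' : stopChildren f S, (S'.1).set) = ⋃ S', s S' := Set.inter_iUnion _ _
  have hcase : ∀ S', s S' = ∅ ∨ s S' = (S'.1).set := by
    intro S'
    rcases (s S').eq_empty_or_nonempty with h | ⟨x, hxQ, hxS'⟩
    · exact Or.inl h
    · exact Or.inr (Set.inter_eq_right.2 ((DyadicCube.subset_or_subset_of_mem hxQ hxS').resolve_left
        (hQ _ S'.2)))
  have hconst : ∀ S', Set.EqOn (stopFun f S) (fun _ => cubeAvg volume f S'.1) (s S') :=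
    fun S' x hx => stopFun_of_mem_stopChildren S'.2 hx.2
  have hfin : ∀ S', volume (s S') ≠ ∞ := fun S' =>
    measure_ne_top_of_subset Set.inter_subset_left Q.volume_set_ne_top
  have hint : ∀ S', ∫ x in s S', stopFun f S x = ∫ x in s S', f x := by
    intro S'
    rw [setIntegral_congr_fun (hsm S') (hconst S'), setIntegral_const]
    rcases hcase S' with h | h
    · simp [h]
    · rw [h, cubeAvg, measureReal_def, smul_inv_smul₀]
      exact (ENNReal.toReal_pos S'.1.volume_set_ne_zero S'.1.volume_set_ne_top).ne'
  have hintOn : ∀ S', IntegrableOn (stopFun f S) (s S') := fun S' =>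
    (integrableOn_const (hfin S')).congr_fun (hconst S').symm (hsm S')
  have hnorm : ∀ S', ∫ x in s S', ‖stopFun f S x‖ ≤ ∫ x in s S', ‖f x‖ := by
    intro S'
    have h : ∫ x in s S', ‖stopFun f S x‖ = ‖∫ x in s S', stopFun f S x‖ := by
      rw [setIntegral_congr_fun (hsm S') (hconst S'), setIntegral_congr_fun (hsm S')
        (g := fun _ => ‖cubeAvg volume f S'.1‖) fun x hx => congrArg norm (hconst S' hx),
        setIntegral_const, setIntegral_const, norm_smul, Real.norm_of_nonneg measureReal_nonneg,
        smul_eq_mul]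
    rw [h, hint]
    exact norm_integral_le_integral_norm _
  have hsub : (⋃ S', s S') ⊆ Q.set := Set.iUnion_subset fun S' => Set.inter_subset_left
  have hsummable : Summable fun S' => ∫ x in s S', ‖f x‖ :=
    (hasSum_integral_iUnion hsm hsd (hfQ.mono_set hsub).norm).summable
  have hU : IntegrableOn (stopFun f S) (⋃ S', s S') :=
    integrableOn_iUnion_of_summable_integral_norm hintOn
      (hsummable.of_nonneg_of_le (fun S' => integral_nonneg fun x => norm_nonneg _) hnorm)
  have hoff : Set.EqOn f (stopFun f S) (Q.set \ ⋃ S' : stopChildren f S, (S'.1).set) := by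
    intro x hx
    rw [stopFun_of_notMem fun S' hS' h => hx.2 (Set.mem_iUnion.2 ⟨⟨S', hS'⟩, h⟩),
      Set.indicator_of_mem (hQS hx.1)]
  have hgQ : IntegrableOn (stopFun f S) Q.set := by
    rw [← Set.inter_union_sdiff Q.set (⋃ S' : stopChildren f S, (S'.1).set), hUs]
    exact hU.union ((hfQ.mono_set Set.sdiff_subset).congr_fun hoff (Q.measurableSet_set.diff hUm))
  rw [← integral_inter_add_sdiff hUm hfQ, ← integral_inter_add_sdiff hUm hgQ, hUs,
    integral_iUnion hsm hsd (hfQ.mono_set hsub), integral_iUnion hsm hsd hU,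
    setIntegral_congr_fun (Q.measurableSet_set.diff hUm) hoff]
  simp only [hint]

theorem cubeAvgN_le_of_not_subset_stopChildren {F : Type*} [NormedAddCommGroup F]
    {f : (Fin d → ℝ) → F} {Q S : DyadicCube d}
    (hQS : Q.set ⊆ S.set) (hQ : ∀ S' ∈ stopChildren f S, ¬ Q.set ⊆ S'.set) :
    cubeAvgN volume f Q ≤ 2 * cubeAvgN volume f S := by
  rcases hQS.eq_or_ssubset with h | h
  · rw [cubeAvgN_congr f h]
    exact le_mul_of_one_le_left zero_le (by norm_num)
  · by_contra! hlt
    obtain ⟨R, hR, hQR⟩ := exists_stopChildren_superset h hlt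
    exact hQ R hR hQR

theorem cubeAvgN_stopChildren_le {F : Type*} [NormedAddCommGroup F]
    {f : (Fin d → ℝ) → F} {S S' : DyadicCube d}
    (hS' : S' ∈ stopChildren f S) :
    cubeAvgN volume f S' ≤ 2 * 2 ^ d * cubeAvgN volume f S := by
  have hd := DyadicCube.dim_ne_zero_of_ssubset hS'.1
  obtain ⟨x, hx⟩ := S'.nonempty_set
  have hxP := DyadicCube.mem_containing (S'.k - 1) x
  set P := DyadicCube.containing (S'.k - 1) x
  have hPk : P.k = S'.k - 1 := rfl
  have hsub : S'.set ⊆ P.set := DyadicCube.set_subset_of_mem (by omega) hxP hx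
  have hlt : S.k < S'.k := by
    by_contra! h
    exact hS'.1.ne (DyadicCube.set_eq_of_subset_of_k_le hS'.1.1 h)
  have hPS : P.set ⊆ S.set := DyadicCube.set_subset_of_mem (by omega) (hS'.1.1 hx) hxP
  have hP : cubeAvgN volume f P ≤ 2 * cubeAvgN volume f S := by
    refine cubeAvgN_le_of_not_subset_stopChildren hPS fun T hT hPT => ?_
    have h := DyadicCube.k_le_of_subset hd
      (hPT.trans (hS'.2.2 T hT.1 hT.2.1 (hsub.trans hPT)).subset)
    omega
  calc cubeAvgN volume f S' ≤ 2 ^ d * cubeAvgN volume f P :=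
        cubeAvgN_le_of_subset_of_k_eq f hsub (by omega)
    _ ≤ 2 ^ d * (2 * cubeAvgN volume f S) := mul_le_mul_right hP _
    _ = 2 * 2 ^ d * cubeAvgN volume f S := by ring

theorem ae_enorm_stopFun_le {f : (Fin d → ℝ) → E} (hf : LocallyIntegrable f volume)
    (S : DyadicCube d) :
    ∀ᵐ x : Fin d → ℝ, ‖stopFun f S x‖ₑ ≤ 2 * 2 ^ d * cubeAvgN volume f S := by
  filter_upwards [ae_enorm_le_of_forall_cubeAvgN_le hf] with x hx
  by_cases hxU : ∃ S' ∈ stopChildren f S, x ∈ S'.set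
  · obtain ⟨S', hS', hxS'⟩ := hxU
    rw [stopFun_of_mem_stopChildren hS' hxS']
    exact (enorm_cubeAvg_le f S').trans (cubeAvgN_stopChildren_le hS')
  · push Not at hxU
    rw [stopFun_of_notMem hxU]
    by_cases hxS : x ∈ S.set
    · rw [Set.indicator_of_mem hxS]
      refine (hx S.k (2 * cubeAvgN volume f S) fun Q hxQ hk => ?_).trans ?_
      · exact cubeAvgN_le_of_not_subset_stopChildren (DyadicCube.set_subset_of_mem hk hxS hxQ)
          fun S' hS' h => hxU S' hS' (h hxQ)
      · rw [mul_right_comm]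
        exact le_mul_of_one_le_right zero_le (one_le_pow₀ (by norm_num))
    · rw [Set.indicator_of_notMem hxS, enorm_zero]
      exact zero_le

/-- The stopping-time construction produces a sparse family with `L^∞` control:
(1) `∑_{S'∈ch(S)} |S'| ≤ |S|/2` and the family is sparse;
(2) `∫_Q f = ∫_Q f_S` whenever `π_𝒮(Q) = S`;
(3) `‖f_S‖_∞ ≤ 2·2^d ⟨‖f‖⟩_S`. -/
theorem stopping_family_sparse
    (f : (Fin d → ℝ) → E) (hf : LocallyIntegrable f volume)
    (Q₀ : DyadicCube d) (S : DyadicCube d) (hS : S ∈ stopFamily f Q₀) :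
    (∑' S' : stopChildren f S, volume (S'.1).set ≤ volume S.set / 2) ∧
    IsSparse volume (stopFamily f Q₀) ∧
    (∀ Q : DyadicCube d, isStopParent (stopFamily f Q₀) Q S →
      ∫ x in Q.set, f x =
      ∫ x in Q.set,
        ((S.set \ ⋃ S' ∈ stopChildren f S, DyadicCube.set S').indicator f x
          + ∑' S' : stopChildren f S,
              (S'.1).set.indicator (fun _ => cubeAvg volume f S'.1) x)) ∧
    (∀ᵐ x ∂(volume : Measure (Fin d → ℝ)),
      (‖(S.set \ ⋃ S' ∈ stopChildren f S, DyadicCube.set S').indicator f x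
          + ∑' S' : stopChildren f S,
              (S'.1).set.indicator (fun _ => cubeAvg volume f S'.1) x‖₊ : ℝ≥0∞)
        ≤ 2 * 2 ^ d * cubeAvgN volume f S) := by
  refine ⟨tsum_volume_stopChildren_le hf S, isSparse_stopFamily hf Q₀, fun Q hQ => ?_,
    ae_enorm_stopFun_le hf S⟩
  exact integral_stopFun_eq hf hQ.2.1 fun S' hS' h =>
    hS'.1.2 (hQ.2.2 S' (stopChildren_subset_stopFamily hS hS') h)

end
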